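/- Let p ∈ [1, ∞], let F : 𝕋 → ℂ be absolutely continuous with Ḟ ∈ L^p(𝕋), and let f = P[F] be its Poisson integral. Then the angular derivative satisfies f_θ = P[Ḟ] on 𝔻; in particular f_θ belongs to the harmonic Hardy space h^p(𝔻) and ‖f_θ‖_p ≤ ‖Ḟ‖_{L^p(𝕋)}. -/

import Mathlib

open MeasureTheory Complex Metric Set Filter
open scoped Real Topology ENNReal

noncomputable section

/-- The Poisson kernel `P(z) = (1-|z|^2)/|1-z|^2`. -/
def poissonKer (z : ℂ) : ℝ := (1 - ‖z‖ ^ 2) / ‖1 - z‖ ^ 2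

/-- The Poisson integral of a boundary function `F` defined on the unit circle. -/
def poissonInt (F : ℂ → ℂ) (z : ℂ) : ℂ :=
  (1 / (2 * π)) * ∫ t in (0:ℝ)..(2 * π),
    (poissonKer (z * Complex.exp (-(t : ℂ) * Complex.I)) : ℂ) *
      F (Complex.exp ((t : ℂ) * Complex.I))

/-- The Poisson integral of a (2π-periodic) function of the angular variable. -/
def poissonIntR (φ : ℝ → ℂ) (z : ℂ) : ℂ :=
  (1 / (2 * π)) * ∫ t in (0:ℝ)..(2 * π),
    (poissonKer (z * Complex.exp (-(t : ℂ) * Complex.I)) : ℂ) * φ t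

/-- The conjugate Poisson kernel `P̃(z) = Im((1+z)/(1-z))`. -/
def conjPoissonKer (z : ℂ) : ℝ := ((1 + z) / (1 - z)).im

/-- The conjugate Poisson integral of a function of the angular variable. -/
def conjPoissonIntR (φ : ℝ → ℂ) (z : ℂ) : ℂ :=
  (1 / (2 * π)) * ∫ t in (0:ℝ)..(2 * π),
    (conjPoissonKer (z * Complex.exp (-(t : ℂ) * Complex.I)) : ℂ) * φ t

/-- Wirtinger derivative `f_z = (1/2)(∂ₓ - i ∂_y) f`. -/
def wdz (f : ℂ → ℂ) (z : ℂ) : ℂ :=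
  (1 / 2) * (fderiv ℝ f z 1 - Complex.I * fderiv ℝ f z Complex.I)

/-- Wirtinger derivative `f_z̄ = (1/2)(∂ₓ + i ∂_y) f`. -/
def wdzb (f : ℂ → ℂ) (z : ℂ) : ℂ :=
  (1 / 2) * (fderiv ℝ f z 1 + Complex.I * fderiv ℝ f z Complex.I)

/-- The angular derivative `f_θ(z) = i (z f_z(z) - z̄ f_z̄(z))`. -/
def fTheta (f : ℂ → ℂ) (z : ℂ) : ℂ :=
  Complex.I * (z * wdz f z - (starRingEnd ℂ) z * wdzb f z)

/-- The radial derivative multiplied by `r`: `r f_r(z) = z f_z(z) + z̄ f_z̄(z)`. -/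
def rFr (f : ℂ → ℂ) (z : ℂ) : ℂ :=
  z * wdz f z + (starRingEnd ℂ) z * wdzb f z

/-- `F : 𝕋 → ℂ` is absolutely continuous with angular derivative `Ḟ = Fd`,
i.e. `t ↦ F(e^{it})` is an indefinite integral of the (locally integrable,
2π-periodic) function `Fd`. -/
def IsACDeriv (F : ℂ → ℂ) (Fd : ℝ → ℂ) : Prop :=
  (∀ a b : ℝ, IntervalIntegrable Fd MeasureTheory.volume a b) ∧
  Function.Periodic Fd (2 * π) ∧
  ∀ t : ℝ, F (Complex.exp ((t : ℂ) * Complex.I)) = F 1 + ∫ s in (0:ℝ)..t, Fd s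

/-- membership in `L^p(𝕋)`, identifying `𝕋` with `[0, 2π)`. -/
def MemLpT (p : ℝ≥0∞) (φ : ℝ → ℂ) : Prop :=
  MeasureTheory.MemLp φ p (MeasureTheory.volume.restrict (Ioc (0:ℝ) (2 * π)))

/-- The integral mean `M_p(r, g)`. -/
def Mp (p : ℝ) (g : ℂ → ℂ) (r : ℝ) : ℝ :=
  ((1 / (2 * π)) * ∫ θ in (0:ℝ)..(2 * π),
      ‖g ((r : ℂ) * Complex.exp ((θ : ℂ) * Complex.I))‖ ^ p) ^ (1 / p)

/-- The `L^p(𝕋)` norm `((1/2π) ∫ |φ|^p)^{1/p}`. -/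
def lpNormT (p : ℝ) (φ : ℝ → ℂ) : ℝ :=
  ((1 / (2 * π)) * ∫ t in (0:ℝ)..(2 * π), ‖φ t‖ ^ p) ^ (1 / p)

/-- Membership in the analytic Hardy space `H^p(𝔻)` for `p ∈ [1, ∞)`. -/
def MemHp (p : ℝ) (g : ℂ → ℂ) : Prop :=
  DifferentiableOn ℂ g (ball (0:ℂ) 1) ∧ ∃ M : ℝ, ∀ r ∈ Ioo (0:ℝ) 1, Mp p g r ≤ M

/-- Membership in `H^∞(𝔻)`: bounded analytic functions on the unit disk. -/
def MemHinf (g : ℂ → ℂ) : Prop :=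
  DifferentiableOn ℂ g (ball (0:ℂ) 1) ∧ ∃ M : ℝ, ∀ z ∈ ball (0:ℂ) 1, ‖g z‖ ≤ M

/-- Harmonicity on the unit disk: `f` is C² with vanishing Laplacian. -/
def HarmonicOnD (f : ℂ → ℂ) : Prop :=
  ContDiffOn ℝ 2 f (ball (0:ℂ) 1) ∧
  ∀ z ∈ ball (0:ℂ) 1,
    fderiv ℝ (fun w => fderiv ℝ f w 1) z 1
      + fderiv ℝ (fun w => fderiv ℝ f w Complex.I) z Complex.I = 0

/-- Membership in the harmonic Hardy space `h^p(𝔻)` for `p ∈ [1, ∞)`. -/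
def Memhp (p : ℝ) (g : ℂ → ℂ) : Prop :=
  HarmonicOnD g ∧ ∃ M : ℝ, ∀ r ∈ Ioo (0:ℝ) 1, Mp p g r ≤ M

/-- Membership in `h^∞(𝔻)`: bounded harmonic functions on the unit disk. -/
def Memhinf (g : ℂ → ℂ) : Prop :=
  HarmonicOnD g ∧ ∃ M : ℝ, ∀ z ∈ ball (0:ℂ) 1, ‖g z‖ ≤ M

/-- `L` is the value of the principal-value Hilbert transform
`(1/2π) p.v. ∫ φ(t)/tan((θ-t)/2) dt` of (the 2π-periodic) `φ` at `θ`. -/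
def IsPVHilbert (φ : ℝ → ℂ) (θ : ℝ) (L : ℂ) : Prop :=
  Filter.Tendsto
    (fun ε : ℝ => (1 / (2 * π)) *
      ∫ t in Ioo (θ - π) (θ + π) \ Ioo (θ - ε) (θ + ε),
        φ t / (Real.tan ((θ - t) / 2) : ℂ))
    (nhdsWithin 0 (Ioi 0)) (nhds L)

lemma ac_integral {g : ℝ → ℂ} {a b : ℝ} (h : IntervalIntegrable g volume a b) :
    AbsolutelyContinuousOnInterval (fun x ↦ ∫ v in a..x, g v) a b := by
  have hre : IntervalIntegrable (fun x => (g x).re) volume a b :=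
    ⟨h.1.re, h.2.re⟩
  have him : IntervalIntegrable (fun x => (g x).im) volume a b :=
    ⟨h.1.im, h.2.im⟩
  have c1 : AbsolutelyContinuousOnInterval (fun _ : ℝ => (1:ℂ)) a b :=
    (contDiff_const.contDiffOn).absolutelyContinuousOnInterval
  have cI : AbsolutelyContinuousOnInterval (fun _ : ℝ => Complex.I) a b :=
    (contDiff_const.contDiffOn).absolutelyContinuousOnInterval
  have h1 := (hre.absolutelyContinuousOnInterval_intervalIntegral (c := a) (by simp)).fun_smul c1
  have h2 := (him.absolutelyContinuousOnInterval_intervalIntegral (c := a) (by simp)).fun_smul cI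
  have h3 := h1.fun_add h2
  have key : ∀ x ∈ uIcc a b, (∫ v in a..x, g v) =
      (∫ v in a..x, (g v).re) • (1:ℂ) + (∫ v in a..x, (g v).im) • Complex.I := by
    intro x hx
    have hs : uIcc a x ⊆ uIcc a b := uIcc_subset_uIcc_left hx
    have hr := hre.mono_set hs
    have hi := him.mono_set hs
    rw [← intervalIntegral.integral_smul_const, ← intervalIntegral.integral_smul_const,
      ← intervalIntegral.integral_add]
    · congr 1; ext v; simp [Complex.re_add_im]
    · exact ⟨hr.1.smul_const _, hr.2.smul_const _⟩
    · exact ⟨hi.1.smul_const _, hi.2.smul_const _⟩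
  rw [absolutelyContinuousOnInterval_iff] at h3 ⊢
  intro ε hε
  obtain ⟨δ, hδ, H⟩ := h3 ε hε
  refine ⟨δ, hδ, fun E hE hs => ?_⟩
  convert H E hE hs using 1
  refine Finset.sum_congr rfl fun i hi => ?_
  obtain ⟨h5, h6⟩ := hE.1 i hi
  rw [key _ h5, key _ h6]

lemma ibp {u v v' g : ℝ → ℂ} {a b : ℝ} (hg : IntervalIntegrable g volume a b)
    (hu : ∀ t, u t = u a + ∫ s in a..t, g s)
    (hv : ∀ t, HasDerivAt v (v' t) t) (hv' : Continuous v') :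
    ∫ t in a..b, (g t * v t + u t * v' t) = u b * v b - u a * v a := by
  have hvc : Continuous v := continuous_iff_continuousAt.2 fun t => (hv t).continuousAt
  have hvd : ContDiff ℝ 1 v := by
    rw [contDiff_one_iff_deriv]
    refine ⟨fun t => (hv t).differentiableAt, ?_⟩
    rwa [show deriv v = v' from funext fun t => (hv t).deriv]
  have hvac : AbsolutelyContinuousOnInterval v a b := hvd.contDiffOn.absolutelyContinuousOnInterval
  have huac : AbsolutelyContinuousOnInterval u a b := by
    rw [show u = fun t => u a + ∫ s in a..t, g s from funext hu]
    exact AbsolutelyContinuousOnInterval.fun_add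
      ((contDiff_const (c := u a)).contDiffOn).absolutelyContinuousOnInterval (ac_integral hg)
  have hI : IntervalIntegrable (fun t => g t * v t + u t * v' t) volume a b := by
    refine (hg.mul_continuousOn hvc.continuousOn).add ?_
    exact (huac.continuousOn.mul hv'.continuousOn).intervalIntegrable
  have hH := (huac.fun_smul hvac).fun_sub (ac_integral hI)
  have hH0 : ∀ᵐ x, x ∈ uIcc a b → HasDerivAt
      (fun x => u x • v x - ∫ t in a..x, (g t * v t + u t * v' t)) 0 x := by
    filter_upwards [hg.ae_hasDerivAt_integral, hI.ae_hasDerivAt_integral] with x h1 h2 h3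
    have h4 : HasDerivAt u (g x) x := by
      rw [show u = fun t => u a + ∫ s in a..t, g s from funext hu]
      exact (h1 h3 a (by simp)).const_add _
    have h5 := (h4.mul (hv x)).sub (h2 h3 a (by simp))
    rw [sub_self] at h5
    exact h5
  obtain ⟨C, hC⟩ := hH.const_of_ae_hasDerivAt_zero hH0
  have e1 := hC a (by simp)
  have e2 := hC b (by simp)
  simp only [intervalIntegral.integral_same, smul_eq_mul, sub_zero] at e1 e2
  rw [e1, ← e2]; ring

/-- Cauchy kernel. -/
def cker (z : ℂ) (t : ℝ) : ℂ := Complex.exp (t * Complex.I) / (Complex.exp (t * Complex.I) - z)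

/-- derivative of the Cauchy kernel in `z`. -/
def cker' (z : ℂ) (t : ℝ) : ℂ :=
  Complex.exp (t * Complex.I) / (Complex.exp (t * Complex.I) - z) ^ 2

/-- Cauchy integral. -/
def Cau (φ : ℝ → ℂ) (z : ℂ) : ℂ := (1 / (2 * π)) * ∫ t in (0:ℝ)..(2 * π), cker z t * φ t

lemma exp_sub_bound {z : ℂ} (t : ℝ) : 1 - ‖z‖ ≤ ‖Complex.exp (t * Complex.I) - z‖ := by
  have := norm_sub_norm_le (Complex.exp (t * Complex.I)) z
  rwa [Complex.norm_exp_ofReal_mul_I] at this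

lemma exp_sub_ne {z : ℂ} (hz : ‖z‖ < 1) (t : ℝ) : Complex.exp (t * Complex.I) - z ≠ 0 := by
  rw [← norm_pos_iff]; linarith [exp_sub_bound (z := z) t]

lemma cker_cont {z : ℂ} (hz : ‖z‖ < 1) : Continuous (cker z) := by
  unfold cker
  exact Continuous.div (by fun_prop) (by fun_prop) (exp_sub_ne hz)

lemma cker'_cont {z : ℂ} (hz : ‖z‖ < 1) : Continuous (cker' z) := by
  unfold cker'
  exact Continuous.div (by fun_prop) (by fun_prop) (fun t => pow_ne_zero 2 (exp_sub_ne hz t))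

lemma cau_hasDerivAt {φ : ℝ → ℂ} (hφ : IntervalIntegrable φ volume 0 (2 * π)) {z : ℂ}
    (hz : ‖z‖ < 1) :
    HasDerivAt (Cau φ) ((1 / (2 * π)) * ∫ t in (0:ℝ)..(2 * π), cker' z t * φ t) z := by
  obtain ⟨ρ, h1, h2⟩ := exists_between hz
  have hgm : AEStronglyMeasurable φ (volume.restrict (uIoc 0 (2 * π))) :=
    (intervalIntegrable_iff.1 hφ).aestronglyMeasurable
  have hs : ball (0:ℂ) ρ ∈ 𝓝 z := isOpen_ball.mem_nhds (by simpa using h1)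
  unfold Cau
  apply HasDerivAt.const_mul
  refine (intervalIntegral.hasDerivAt_integral_of_dominated_loc_of_deriv_le
    (F' := fun x t => cker' x t * φ t)
    (bound := fun t ↦ ((1 - ρ) ^ 2)⁻¹ * ‖φ t‖) hs ?_ ?_ ?_ ?_ ?_ ?_).2
  · filter_upwards [hs] with x hx
    have hx : ‖x‖ < 1 := by simp at hx; linarith
    exact (cker_cont hx).aestronglyMeasurable.mul hgm
  · exact hφ.continuousOn_mul (cker_cont hz).continuousOn
  · exact (cker'_cont hz).aestronglyMeasurable.mul hgm
  · filter_upwards with t _ x hx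
    have hx : ‖x‖ < ρ := by simpa using hx
    have := exp_sub_bound (z := x) t
    rw [norm_mul, cker', norm_div, Complex.norm_exp_ofReal_mul_I, norm_pow, one_div]
    have h0 : 0 < 1 - ρ := by linarith
    gcongr
    linarith
  · exact hφ.norm.const_mul _
  · filter_upwards with t _ x hx
    have hx : ‖x‖ < 1 := by simp at hx; linarith
    have hne := exp_sub_ne hx t
    have : HasDerivAt (fun x => cker x t) (cker' x t) x := by
      have h := (hasDerivAt_const x (Complex.exp (t * Complex.I))).div
        ((hasDerivAt_id' x).const_sub (Complex.exp (t * Complex.I))) hne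
      exact h.congr_deriv (by simp [cker'])
    exact this.mul_const _

lemma cker_hasDerivAt {z : ℂ} (hz : ‖z‖ < 1) (t : ℝ) :
    HasDerivAt (cker z) (-(Complex.I * z * cker' z t)) t := by
  have hne := exp_sub_ne hz t
  have he : HasDerivAt (fun t : ℝ => Complex.exp (t * Complex.I))
      (Complex.exp (t * Complex.I) * Complex.I) t := by
    have := ((Complex.ofRealCLM.hasDerivAt (x := t)).mul_const Complex.I).cexp
    simpa using this
  have h := he.div (he.sub_const z) hne
  refine h.congr_deriv ?_
  unfold cker'
  field_simp
  ring

lemma exp_two_pi : Complex.exp (((2 * π : ℝ) : ℂ) * Complex.I) = 1 := by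
  push_cast; exact Complex.exp_two_pi_mul_I

/-- `i z (Cau φ)'(z) = Cau φ' (z)`. -/
lemma cau_ibp {u g : ℝ → ℂ} (hg : IntervalIntegrable g volume 0 (2 * π))
    (hu : ∀ t, u t = u 0 + ∫ s in (0:ℝ)..t, g s) (hper : u (2 * π) = u 0)
    {z : ℂ} (hz : ‖z‖ < 1) :
    Complex.I * z * ((1 / (2 * π)) * ∫ t in (0:ℝ)..(2 * π), cker' z t * u t) = Cau g z := by
  have hc : Continuous fun t => -(Complex.I * z * cker' z t) :=
    (continuous_const.mul (cker'_cont hz)).neg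
  have h := ibp hg hu (fun t => cker_hasDerivAt hz t) hc
  have e : cker z (2 * π) = cker z 0 := by
    simp only [cker]; rw [exp_two_pi]; simp
  rw [hper, e, sub_self] at h
  have huc : ContinuousOn u (uIcc 0 (2 * π)) := by
    rw [show u = fun t => u 0 + ∫ s in (0:ℝ)..t, g s from funext hu]
    exact (continuousOn_const).add (ac_integral hg).continuousOn
  rw [intervalIntegral.integral_add] at h
  · have e2 : ∫ t in (0:ℝ)..(2 * π), u t * -(Complex.I * z * cker' z t) =
        -(Complex.I * z) * ∫ t in (0:ℝ)..(2 * π), cker' z t * u t := by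
      rw [← intervalIntegral.integral_const_mul]
      congr 1; ext t; ring
    have e3 : ∫ t in (0:ℝ)..(2 * π), g t * cker z t = ∫ t in (0:ℝ)..(2 * π), cker z t * g t := by
      congr 1; ext t; ring
    rw [e2, e3] at h
    unfold Cau
    linear_combination -(1 / (2 * π) : ℂ) * h
  · exact hg.mul_continuousOn (cker_cont hz).continuousOn
  · exact (huc.mul hc.continuousOn).intervalIntegrable

lemma poissonKer_eq {z : ℂ} (hz : ‖z‖ < 1) (t : ℝ) :
    (poissonKer (z * Complex.exp (-(t : ℂ) * Complex.I)) : ℂ) =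
      cker z t + (starRingEnd ℂ) (cker z t) - 1 := by
  have hne := exp_sub_ne hz t
  have hE := Complex.exp_ne_zero (t * Complex.I)
  have hn := Complex.norm_exp_ofReal_mul_I t
  rw [neg_mul, Complex.exp_neg]
  unfold poissonKer cker
  generalize Complex.exp (t * Complex.I) = E at *
  have h1 : (1 : ℂ) - z * E⁻¹ = (E - z) / E := by field_simp
  have h2 : (E * (starRingEnd ℂ) E : ℂ) = 1 := by
    rw [Complex.mul_conj, Complex.normSq_eq_norm_sq, hn]; simp
  have hc : (starRingEnd ℂ) E - (starRingEnd ℂ) z ≠ 0 := by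
    rw [← map_sub]; exact (map_ne_zero _).2 hne
  rw [h1, norm_div, norm_mul, norm_inv, hn]
  push_cast
  simp only [inv_one, mul_one, div_one]
  rw [← Complex.mul_conj', ← Complex.mul_conj', map_div₀, map_sub]
  field_simp
  linear_combination -h2

lemma poissonIntR_eq {φ : ℝ → ℂ} (hφ : IntervalIntegrable φ volume 0 (2 * π)) {z : ℂ}
    (hz : ‖z‖ < 1) :
    poissonIntR φ z = Cau φ z + (starRingEnd ℂ) (Cau (fun t => (starRingEnd ℂ) (φ t)) z)
      - (1 / (2 * π)) * ∫ t in (0:ℝ)..(2 * π), φ t := by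
  have hc := cker_cont hz
  have hc' : Continuous fun t => (starRingEnd ℂ) (cker z t) := Complex.continuous_conj.comp hc
  have h1 : (starRingEnd ℂ) (Cau (fun t => (starRingEnd ℂ) (φ t)) z) =
      (1 / (2 * π)) * ∫ t in (0:ℝ)..(2 * π), (starRingEnd ℂ) (cker z t) * φ t := by
    unfold Cau
    rw [map_mul]
    congr 1
    · simp [Complex.conj_ofNat]
    · rw [intervalIntegral.integral_of_le (by positivity),
        intervalIntegral.integral_of_le (by positivity), ← integral_conj]
      simp
  rw [h1]
  unfold poissonIntR Cau
  rw [← mul_add, ← mul_sub, ← intervalIntegral.integral_add, ← intervalIntegral.integral_sub]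
  · congr 2; ext t; rw [poissonKer_eq hz]; ring
  · exact (hφ.continuousOn_mul hc.continuousOn).add (hφ.continuousOn_mul hc'.continuousOn)
  · exact hφ
  · exact hφ.continuousOn_mul hc.continuousOn
  · exact hφ.continuousOn_mul hc'.continuousOn

lemma hasFDerivAt_add_conj {A B : ℂ → ℂ} {a b z : ℂ} (hA : HasDerivAt A a z)
    (hB : HasDerivAt B b z) :
    ∃ L : ℂ →L[ℝ] ℂ, HasFDerivAt (fun w => A w + (starRingEnd ℂ) (B w)) L z ∧
      ∀ v, L v = a * v + (starRingEnd ℂ) (b * v) := by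
  have h1 := hA.hasFDerivAt.restrictScalars ℝ
  have h2 := hB.hasFDerivAt.restrictScalars ℝ
  have h3 := h1.add ((Complex.conjCLE.toContinuousLinearMap.hasFDerivAt (x := B z)).comp z h2)
  refine ⟨_, h3, fun v => ?_⟩
  simp [mul_comm]

lemma fderiv_add_conj {A B : ℂ → ℂ} {a b z : ℂ} (hA : HasDerivAt A a z)
    (hB : HasDerivAt B b z) (v : ℂ) :
    fderiv ℝ (fun w => A w + (starRingEnd ℂ) (B w)) z v = a * v + (starRingEnd ℂ) (b * v) := by
  obtain ⟨L, hL, h⟩ := hasFDerivAt_add_conj hA hB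
  rw [hL.fderiv, h]

lemma fTheta_add_conj {f A B : ℂ → ℂ} {a b z c : ℂ} (hA : HasDerivAt A a z)
    (hB : HasDerivAt B b z) (hf : f =ᶠ[𝓝 z] fun w => A w + (starRingEnd ℂ) (B w) - c) :
    fTheta f z = Complex.I * z * a + (starRingEnd ℂ) (Complex.I * z * b) := by
  have h : ∀ v, fderiv ℝ f z v = a * v + (starRingEnd ℂ) (b * v) := by
    intro v
    rw [hf.fderiv_eq, fderiv_sub_const, fderiv_add_conj hA hB]
  unfold fTheta wdz wdzb
  rw [h, h]
  simp only [map_mul, Complex.conj_I, map_one]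
  linear_combination (Complex.I * z * ((starRingEnd ℂ) b - a) / 2 + Complex.I * (starRingEnd ℂ) z *
    ((starRingEnd ℂ) b - a) / 2) * Complex.I_sq

lemma harmonic_add_conj {f A B : ℂ → ℂ} (hA : DifferentiableOn ℂ A (ball 0 1))
    (hB : DifferentiableOn ℂ B (ball 0 1))
    (hf : ∀ z ∈ ball (0:ℂ) 1, f z = A z + (starRingEnd ℂ) (B z)) : HarmonicOnD f := by
  constructor
  · have h1 : ContDiffOn ℝ 2 A (ball (0:ℂ) 1) := (hA.contDiffOn isOpen_ball).restrict_scalars ℝ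
    have h2 : ContDiffOn ℝ 2 B (ball (0:ℂ) 1) := (hB.contDiffOn isOpen_ball).restrict_scalars ℝ
    exact (h1.add (Complex.conjCLE.contDiff.comp_contDiffOn h2)).congr hf
  · intro z hz
    have hA' := (hA.deriv isOpen_ball)
    have hB' := (hB.deriv isOpen_ball)
    have key : ∀ v, ∀ w ∈ ball (0:ℂ) 1, fderiv ℝ f w v =
        deriv A w * v + (starRingEnd ℂ) (deriv B w * v) := by
      intro v w hw
      have hn := isOpen_ball.mem_nhds hw
      have he : f =ᶠ[𝓝 w] fun w => A w + (starRingEnd ℂ) (B w) := by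
        filter_upwards [hn] with x hx using hf x hx
      rw [he.fderiv_eq]
      exact fderiv_add_conj (hA.differentiableAt hn).hasDerivAt
        (hB.differentiableAt hn).hasDerivAt v
    have hn := isOpen_ball.mem_nhds hz
    have key2 : ∀ v, fderiv ℝ (fun w => fderiv ℝ f w v) z v =
        deriv (deriv A) z * v * v + (starRingEnd ℂ) (deriv (deriv B) z * v * v) := by
      intro v
      have he : (fun w => fderiv ℝ f w v) =ᶠ[𝓝 z]
          fun w => deriv A w * v + (starRingEnd ℂ) (deriv B w * v) := by
        filter_upwards [hn] with x hx using key v x hx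
      rw [he.fderiv_eq]
      exact fderiv_add_conj ((hA'.differentiableAt hn).hasDerivAt.mul_const v)
        ((hB'.differentiableAt hn).hasDerivAt.mul_const v) v
    rw [key2, key2]
    simp only [map_mul, map_one, map_neg, mul_assoc, Complex.I_mul_I]
    ring

lemma poissonKer_nonneg {w : ℂ} (hw : ‖w‖ < 1) : 0 ≤ poissonKer w := by
  unfold poissonKer
  have : ‖w‖ ^ 2 ≤ 1 := by nlinarith [norm_nonneg w]
  exact div_nonneg (by linarith) (by positivity)

lemma norm_mul_exp_neg (z : ℂ) (t : ℝ) : ‖z * Complex.exp (-(t : ℂ) * Complex.I)‖ = ‖z‖ := by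
  rw [norm_mul, ← Complex.ofReal_neg, Complex.norm_exp_ofReal_mul_I, mul_one]

lemma poissonKer_cont {z : ℂ} (hz : ‖z‖ < 1) :
    Continuous fun t : ℝ => poissonKer (z * Complex.exp (-(t : ℂ) * Complex.I)) := by
  unfold poissonKer
  refine Continuous.div (by fun_prop) (by fun_prop) fun t => ?_
  have := norm_mul_exp_neg z t
  have h2 := norm_sub_norm_le 1 (z * Complex.exp (-(t : ℂ) * Complex.I))
  rw [this, norm_one] at h2
  have : 0 < ‖1 - z * Complex.exp (-(t : ℂ) * Complex.I)‖ := by linarith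
  positivity

lemma poissonKer_symm (r θ t : ℝ) :
    poissonKer ((r : ℂ) * Complex.exp ((θ : ℂ) * Complex.I) * Complex.exp (-(t : ℂ) * Complex.I)) =
    poissonKer ((r : ℂ) * Complex.exp ((t : ℂ) * Complex.I) *
      Complex.exp (-(θ : ℂ) * Complex.I)) := by
  have h : (r : ℂ) * Complex.exp ((θ : ℂ) * Complex.I) * Complex.exp (-(t : ℂ) * Complex.I) =
      (starRingEnd ℂ) ((r : ℂ) * Complex.exp ((t : ℂ) * Complex.I) *
      Complex.exp (-(θ : ℂ) * Complex.I)) := by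
    simp only [map_mul, map_neg, ← Complex.exp_conj, Complex.conj_ofReal, Complex.conj_I]
    rw [mul_assoc, mul_assoc, ← Complex.exp_add, ← Complex.exp_add]
    congr 2; ring
  rw [h]
  unfold poissonKer
  rw [Complex.norm_conj, ← map_one (starRingEnd ℂ), ← map_sub, Complex.norm_conj, map_one]

lemma poissonKer_integral {z : ℂ} (hz : ‖z‖ < 1) :
    ∫ t in (0:ℝ)..(2 * π), poissonKer (z * Complex.exp (-(t : ℂ) * Complex.I)) = 2 * π := by
  have h := DiffContOnCl.circleAverage_poissonKernel_smul (R := 1) (c := 0) (w := z)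
    (f := fun _ => (1 : ℂ)) diffContOnCl_const (by simpa using hz)
  rw [Real.circleAverage_def] at h
  have e : ∀ t : ℝ, (poissonKernel 0 z • fun _ => (1:ℂ)) (circleMap 0 1 t) =
      ((poissonKer (z * Complex.exp (-(t : ℂ) * Complex.I)) : ℝ) : ℂ) := by
    intro t
    have hn := Complex.norm_exp_ofReal_mul_I t
    have hE := Complex.exp_ne_zero (t * Complex.I)
    simp only [Pi.smul_apply', poissonKernel_def, circleMap, sub_zero, zero_add,
      Complex.ofReal_one, one_mul, poissonKer]
    rw [neg_mul, Complex.exp_neg]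
    generalize Complex.exp (t * Complex.I) = E at *
    have h1 : (1 : ℂ) - z * E⁻¹ = (E - z) / E := by field_simp
    rw [h1, norm_div, norm_mul, norm_inv, hn]
    simp
  simp_rw [e] at h
  rw [intervalIntegral.integral_ofReal, Complex.real_smul, ← Complex.ofReal_mul] at h
  have h := Complex.ofReal_injective (h.trans Complex.ofReal_one.symm)
  rwa [inv_mul_eq_one₀ (by positivity), eq_comm] at h

/-- The density. -/
def pden (z : ℂ) (t : ℝ) : ℝ≥0∞ :=
  ENNReal.ofReal (poissonKer (z * Complex.exp (-(t : ℂ) * Complex.I)) / (2 * π))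

lemma pden_cont {z : ℂ} (hz : ‖z‖ < 1) : Continuous (pden z) :=
  ENNReal.continuous_ofReal.comp ((poissonKer_cont hz).div_const _)

lemma pden_lintegral {z : ℂ} (hz : ‖z‖ < 1) :
    ∫⁻ t in Ioc (0:ℝ) (2 * π), pden z t = 1 := by
  unfold pden
  rw [← ofReal_integral_eq_lintegral_ofReal]
  · rw [← intervalIntegral.integral_of_le (by positivity), intervalIntegral.integral_div,
      poissonKer_integral hz, div_self (by positivity), ENNReal.ofReal_one]
  · exact (((poissonKer_cont hz).div_const _).intervalIntegrable 0 (2 * π)).1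
  · refine Eventually.of_forall fun t => ?_
    have := poissonKer_nonneg (w := z * Complex.exp (-(t : ℂ) * Complex.I))
      (by rwa [norm_mul_exp_neg])
    simp only [Pi.zero_apply]; positivity

lemma poisson_pointwise {p : ℝ≥0∞} (hp : 1 ≤ p) {φ : ℝ → ℂ}
    (hφ : AEStronglyMeasurable φ (volume.restrict (Ioc (0:ℝ) (2 * π)))) {z : ℂ} (hz : ‖z‖ < 1) :
    ‖poissonIntR φ z‖ₑ ≤
      eLpNorm φ p ((volume.restrict (Ioc (0:ℝ) (2 * π))).withDensity (pden z)) := by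
  set ν := (volume.restrict (Ioc (0:ℝ) (2 * π))).withDensity (pden z) with hν
  have : IsProbabilityMeasure ν := ⟨by
    rw [hν, withDensity_apply _ MeasurableSet.univ, Measure.restrict_univ, pden_lintegral hz]⟩
  have hac : ν ≪ volume.restrict (Ioc (0:ℝ) (2 * π)) := withDensity_absolutelyContinuous _ _
  refine le_trans ?_ (eLpNorm_le_eLpNorm_of_exponent_le hp (hφ.mono_ac hac))
  rw [eLpNorm_one_eq_lintegral_enorm, hν,
    lintegral_withDensity_eq_lintegral_mul₀ (pden_cont hz).measurable.aemeasurable hφ.enorm]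
  unfold poissonIntR
  rw [intervalIntegral.integral_of_le (by positivity), ← integral_const_mul]
  refine (enorm_integral_le_lintegral_enorm _).trans (le_of_eq ?_)
  congr 1; ext t
  rw [Pi.mul_apply, enorm_mul, enorm_mul, ← mul_assoc]
  congr 1
  have h0 := poissonKer_nonneg (w := z * Complex.exp (-(t : ℂ) * Complex.I))
      (by rwa [norm_mul_exp_neg])
  rw [← enorm_mul, pden, ← ofReal_norm]
  congr 1
  rw [norm_mul, Complex.norm_real, Real.norm_of_nonneg h0, norm_div, norm_mul, Complex.norm_real,
    Real.norm_of_nonneg Real.pi_pos.le]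
  simp; ring

lemma poisson_Linf {φ : ℝ → ℂ}
    (hφ : AEStronglyMeasurable φ (volume.restrict (Ioc (0:ℝ) (2 * π)))) {z : ℂ} (hz : ‖z‖ < 1) :
    ‖poissonIntR φ z‖ₑ ≤ eLpNorm φ ⊤ (volume.restrict (Ioc (0:ℝ) (2 * π))) := by
  refine (poisson_pointwise le_top hφ hz).trans ?_
  rw [eLpNorm_exponent_top, eLpNorm_exponent_top]
  exact eLpNormEssSup_mono_measure _ (withDensity_absolutelyContinuous _ _)

lemma norm_circ {r : ℝ} (hr : r ∈ Ioo (0:ℝ) 1) (θ : ℝ) :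
    ‖(r : ℂ) * Complex.exp ((θ : ℂ) * Complex.I)‖ < 1 := by
  rw [norm_mul, Complex.norm_exp_ofReal_mul_I, Complex.norm_real, mul_one,
    Real.norm_of_nonneg hr.1.le]
  exact hr.2

lemma pden_joint {r : ℝ} (hr : r ∈ Ioo (0:ℝ) 1) : Continuous fun q : ℝ × ℝ =>
    pden ((r : ℂ) * Complex.exp ((q.1 : ℂ) * Complex.I)) q.2 := by
  unfold pden poissonKer
  refine ENNReal.continuous_ofReal.comp (Continuous.div_const ?_ _)
  refine Continuous.div (by fun_prop) (by fun_prop) fun q => ?_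
  have := norm_mul_exp_neg ((r : ℂ) * Complex.exp ((q.1 : ℂ) * Complex.I)) q.2
  have h2 := norm_sub_norm_le 1
    ((r : ℂ) * Complex.exp ((q.1 : ℂ) * Complex.I) * Complex.exp (-(q.2 : ℂ) * Complex.I))
  have h3 := norm_circ hr q.1
  rw [this, norm_one] at h2
  have := h2.trans_lt' (sub_pos.2 h3)
  positivity

lemma poisson_Lp {p : ℝ≥0∞} (hp : 1 ≤ p) {φ : ℝ → ℂ}
    (hφ : AEStronglyMeasurable φ (volume.restrict (Ioc (0:ℝ) (2 * π))))
    {r : ℝ} (hr : r ∈ Ioo (0:ℝ) 1) :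
    eLpNorm (fun θ : ℝ => poissonIntR φ ((r : ℂ) * Complex.exp ((θ : ℂ) * Complex.I)))
          p (volume.restrict (Ioc (0:ℝ) (2 * π)))
        ≤ eLpNorm φ p (volume.restrict (Ioc (0:ℝ) (2 * π))) := by
  have hp0 : p ≠ 0 := (zero_lt_one.trans_le hp).ne'
  by_cases hpt : p = ⊤
  · subst hpt
    rw [eLpNorm_exponent_top]
    exact eLpNormEssSup_le_of_ae_enorm_bound
      (Eventually.of_forall fun θ => poisson_Linf hφ (norm_circ hr θ))
  rw [eLpNorm_eq_lintegral_rpow_enorm_toReal hp0 hpt, eLpNorm_eq_lintegral_rpow_enorm_toReal hp0 hpt]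
  have hpos : 0 < p.toReal := ENNReal.toReal_pos hp0 hpt
  have hφp : AEMeasurable (fun t => ‖φ t‖ₑ ^ p.toReal) (volume.restrict (Ioc (0:ℝ) (2 * π))) :=
    hφ.enorm.pow_const _
  refine ENNReal.rpow_le_rpow ?_ (by positivity)
  calc ∫⁻ θ in Ioc (0:ℝ) (2 * π),
        ‖poissonIntR φ ((r : ℂ) * Complex.exp ((θ : ℂ) * Complex.I))‖ₑ ^ p.toReal
      ≤ ∫⁻ θ in Ioc (0:ℝ) (2 * π), ∫⁻ t in Ioc (0:ℝ) (2 * π),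
          pden ((r : ℂ) * Complex.exp ((θ : ℂ) * Complex.I)) t * ‖φ t‖ₑ ^ p.toReal := by
        refine lintegral_mono fun θ => ?_
        have hz := norm_circ hr θ
        have h := poisson_pointwise hp hφ hz
        rw [eLpNorm_eq_lintegral_rpow_enorm_toReal hp0 hpt,
          lintegral_withDensity_eq_lintegral_mul₀ (pden_cont hz).measurable.aemeasurable hφp,
          one_div, ENNReal.le_rpow_inv_iff hpos] at h
        exact h
    _ = ∫⁻ t in Ioc (0:ℝ) (2 * π), ∫⁻ θ in Ioc (0:ℝ) (2 * π),
          pden ((r : ℂ) * Complex.exp ((θ : ℂ) * Complex.I)) t * ‖φ t‖ₑ ^ p.toReal := by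
        refine lintegral_lintegral_swap ?_
        exact (pden_joint hr).measurable.aemeasurable.mul hφp.comp_snd
    _ = ∫⁻ t in Ioc (0:ℝ) (2 * π), ‖φ t‖ₑ ^ p.toReal := by
        congr 1; ext t
        have hm : Measurable fun θ : ℝ => pden ((r : ℂ) * Complex.exp ((θ : ℂ) * Complex.I)) t :=
          ((pden_joint hr).comp (Continuous.prodMk_left t)).measurable
        rw [lintegral_mul_const _ hm]
        have : ∀ θ : ℝ, pden ((r : ℂ) * Complex.exp ((θ : ℂ) * Complex.I)) t =
            pden ((r : ℂ) * Complex.exp ((t : ℂ) * Complex.I)) θ := fun θ => by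
          unfold pden; rw [poissonKer_symm]
        simp_rw [this]
        rw [pden_lintegral (norm_circ hr t), one_mul]

/-- For `p ∈ [1,∞]`, `F : 𝕋 → ℂ` absolutely continuous with
`Ḟ ∈ L^p(𝕋)` and `f = P[F]`: the angular derivative satisfies `f_θ = P[Ḟ]` on `𝔻`;
in particular `f_θ ∈ h^p(𝔻)` and `‖f_θ‖_p ≤ ‖Ḟ‖_{L^p(𝕋)}` (the latter expressed by
comparing the `L^p` norms on each circle of radius `r < 1` with the boundary norm). -/
theorem stmt10 (p : ℝ≥0∞) (hp : 1 ≤ p) (F : ℂ → ℂ) (Fd : ℝ → ℂ)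
    (hF : IsACDeriv F Fd) (hLp : MemLpT p Fd) :
    (∀ z ∈ ball (0:ℂ) 1, fTheta (poissonInt F) z = poissonIntR Fd z) ∧
    ((p ≠ ⊤ → Memhp p.toReal (fTheta (poissonInt F))) ∧
      (p = ⊤ → Memhinf (fTheta (poissonInt F)))) ∧
    (∀ r ∈ Ioo (0:ℝ) 1,
      eLpNorm (fun θ : ℝ => fTheta (poissonInt F) ((r : ℂ) * Complex.exp ((θ : ℂ) * Complex.I)))
          p (volume.restrict (Ioc (0:ℝ) (2 * π)))
        ≤ eLpNorm Fd p (volume.restrict (Ioc (0:ℝ) (2 * π)))) := by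
  obtain ⟨hint, -, hFe⟩ := hF
  set u : ℝ → ℂ := fun t => F (Complex.exp ((t : ℂ) * Complex.I)) with hu
  have hi := hint 0 (2 * π)
  have hu0 : u 0 = F 1 := by simp [hu]
  have hu2 : u (2 * π) = u 0 := by rw [hu0]; simp only [hu]; rw [exp_two_pi]
  have hue : ∀ t, u t = u 0 + ∫ s in (0:ℝ)..t, Fd s := fun t => by rw [hu0]; exact hFe t
  have hmean : ∫ s in (0:ℝ)..(2 * π), Fd s = 0 := by
    have := hue (2 * π)
    rw [hu2] at this
    simpa using this
  have hui : IntervalIntegrable u volume 0 (2 * π) := by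
    have : ContinuousOn u (uIcc 0 (2 * π)) := by
      rw [show u = fun t => u 0 + ∫ s in (0:ℝ)..t, Fd s from funext hue]
      exact (continuousOn_const).add (ac_integral hi).continuousOn
    exact this.intervalIntegrable
  have conj_int : ∀ {g : ℝ → ℂ} {a b : ℝ}, IntervalIntegrable g volume a b →
      IntervalIntegrable (fun t => (starRingEnd ℂ) (g t)) volume a b := fun h =>
    ⟨Complex.conjCLE.toContinuousLinearMap.integrable_comp h.1,
      Complex.conjCLE.toContinuousLinearMap.integrable_comp h.2⟩
  have hic := conj_int hi
  have huic := conj_int hui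
  have hucE : ∀ t, (starRingEnd ℂ) (u t) = (starRingEnd ℂ) (u 0) +
      ∫ s in (0:ℝ)..t, (starRingEnd ℂ) (Fd s) := fun t => by
    rw [hue t, map_add]
    congr 1
    rw [intervalIntegral.intervalIntegral_eq_integral_uIoc,
      intervalIntegral.intervalIntegral_eq_integral_uIoc, integral_conj]
    split_ifs <;> simp
  -- representation of `P[Fd]`
  have hrep : ∀ z ∈ ball (0:ℂ) 1, poissonIntR Fd z =
      Cau Fd z + (starRingEnd ℂ) (Cau (fun t => (starRingEnd ℂ) (Fd t)) z) := fun z hz => by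
    rw [poissonIntR_eq hi (by simpa using hz), hmean, mul_zero, sub_zero]
  have main : ∀ z ∈ ball (0:ℂ) 1, fTheta (poissonInt F) z = poissonIntR Fd z := fun z hz => by
    have hz1 : ‖z‖ < 1 := by simpa using hz
    have hev : poissonInt F =ᶠ[𝓝 z] fun w => Cau u w +
        (starRingEnd ℂ) (Cau (fun t => (starRingEnd ℂ) (u t)) w)
        - (1 / (2 * π)) * ∫ t in (0:ℝ)..(2 * π), u t := by
      filter_upwards [isOpen_ball.mem_nhds hz] with w hw
      exact poissonIntR_eq hui (by simpa using hw)
    rw [fTheta_add_conj (cau_hasDerivAt hui hz1) (cau_hasDerivAt huic hz1) hev, hrep z hz,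
      cau_ibp hi hue hu2 hz1, cau_ibp hic hucE (by rw [hu2]) hz1]
  have hdiff : ∀ {g : ℝ → ℂ}, IntervalIntegrable g volume 0 (2 * π) →
      DifferentiableOn ℂ (Cau g) (ball 0 1) := fun h z hz =>
    (cau_hasDerivAt h (by simpa using hz)).differentiableAt.differentiableWithinAt
  have hharm : HarmonicOnD (fTheta (poissonInt F)) :=
    harmonic_add_conj (hdiff hi) (hdiff hic) fun z hz => (main z hz).trans (hrep z hz)
  have hφ : AEStronglyMeasurable Fd (volume.restrict (Ioc (0:ℝ) (2 * π))) := hLp.1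
  have hcirc : ∀ r ∈ Ioo (0:ℝ) 1, ∀ θ : ℝ,
      (r : ℂ) * Complex.exp ((θ : ℂ) * Complex.I) ∈ ball (0:ℂ) 1 := fun r hr θ => by
    simpa using norm_circ hr θ
  have hbd : ∀ r ∈ Ioo (0:ℝ) 1,
      eLpNorm (fun θ : ℝ => fTheta (poissonInt F) ((r : ℂ) * Complex.exp ((θ : ℂ) * Complex.I)))
          p (volume.restrict (Ioc (0:ℝ) (2 * π)))
        ≤ eLpNorm Fd p (volume.restrict (Ioc (0:ℝ) (2 * π))) := fun r hr => by
    have : (fun θ : ℝ => fTheta (poissonInt F) ((r : ℂ) * Complex.exp ((θ : ℂ) * Complex.I))) =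
        fun θ : ℝ => poissonIntR Fd ((r : ℂ) * Complex.exp ((θ : ℂ) * Complex.I)) :=
      funext fun θ => main _ (hcirc r hr θ)
    rw [this]
    exact poisson_Lp hp hφ hr
  refine ⟨main, ⟨fun hpt => ⟨hharm, ?_⟩, fun hpt => ⟨hharm, ?_⟩⟩, hbd⟩
  · refine ⟨(eLpNorm Fd p (volume.restrict (Ioc (0:ℝ) (2 * π)))).toReal, fun r hr => ?_⟩
    have hp0 : p ≠ 0 := (zero_lt_one.trans_le hp).ne'
    have hpos : 0 < p.toReal := ENNReal.toReal_pos hp0 hpt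
    have hcont : Continuous fun θ : ℝ =>
        fTheta (poissonInt F) ((r : ℂ) * Complex.exp ((θ : ℂ) * Complex.I)) :=
      hharm.1.continuousOn.comp_continuous (by fun_prop) (hcirc r hr)
    have hmem : MemLp (fun θ : ℝ =>
        fTheta (poissonInt F) ((r : ℂ) * Complex.exp ((θ : ℂ) * Complex.I))) p
        (volume.restrict (Ioc (0:ℝ) (2 * π))) :=
      ⟨hcont.aestronglyMeasurable, (hbd r hr).trans_lt hLp.2⟩
    have h := hbd r hr
    rw [hmem.eLpNorm_eq_integral_rpow_norm hp0 hpt, ENNReal.ofReal_le_iff_le_toReal hLp.2.ne] at h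
    refine le_trans ?_ h
    unfold Mp
    rw [intervalIntegral.integral_of_le (by positivity), one_div p.toReal]
    have hnn : 0 ≤ ∫ θ in Ioc (0:ℝ) (2 * π),
        ‖fTheta (poissonInt F) ((r : ℂ) * Complex.exp ((θ : ℂ) * Complex.I))‖ ^ p.toReal :=
      integral_nonneg fun θ => by positivity
    refine Real.rpow_le_rpow (by positivity) ?_ (by positivity)
    refine mul_le_of_le_one_left hnn ?_
    rw [div_le_one (by positivity)]
    linarith [Real.pi_gt_three]
  · refine ⟨(eLpNorm Fd p (volume.restrict (Ioc (0:ℝ) (2 * π)))).toReal, fun z hz => ?_⟩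
    rw [main z hz]
    subst hpt
    have h := poisson_Linf hφ (z := z) (by simpa using hz)
    have h2 := ENNReal.toReal_mono hLp.2.ne h
    simpa using h2

end
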